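/- Let 1 ≤ k ≤ L be integers, λ > 0, K ∈ ℕ, and let s^{(1)} and s^{(2)} be solutions of the truncated system on coordinates 1,…,K, both taking values in [0,1] in every coordinate. If s^{(1)}_j(0) ≥ s^{(2)}_j(0) for all j = 1,…,K and s^{(1)}_{K+1}(t) ≥ s^{(2)}_{K+1}(t) for all t ≥ 0, then s^{(1)}_j(t) ≥ s^{(2)}_j(t) for all j = 1,…,K+1 and all t ≥ 0. -/

import Mathlib

open Finset Set

/-- The polynomial `f ≡ f^{(L,k)}` from the paper. -/
noncomputable def fLk (L k : ℕ) (x : ℝ) : ℝ :=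
  ∑ i ∈ Finset.Icc 1 k,
    (L.choose (L - k + i) : ℝ) * ((L - k + i - 2).choose (i - 1) : ℝ) *
      (-1 : ℝ) ^ (i - 1) * x ^ (L - k + i)

/-- A solution of the truncated system on coordinates `1,…,K`
(no condition on the boundary coordinate `K+1`). -/
def IsTruncSys (L k : ℕ) (lam : ℝ) (K : ℕ) (s : ℝ → ℕ → ℝ) : Prop :=
  (∀ t ∈ Set.Ici (0 : ℝ), s t 0 = 1) ∧
  (∀ j, 1 ≤ j → j ≤ K → ∀ t ∈ Set.Ici (0 : ℝ),
    HasDerivWithinAt (fun τ => s τ j)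
      (lam * (fLk L k (s t (j - 1)) - fLk L k (s t j)) - k * (s t j - s t (j + 1)))
      (Set.Ici (0 : ℝ)) t)

theorem fLk_zero_case (L : ℕ) (hL : 1 ≤ L) (x : ℝ) : fLk L L x = L * x := by
  unfold fLk
  rw [Finset.sum_eq_single 1]
  · simp
  · intro i hi h1
    have h2 : 2 ≤ i := by have := (Finset.mem_Icc.1 hi).1; omega
    have : (L - L + i - 2).choose (i - 1) = 0 := Nat.choose_eq_zero_of_lt (by omega)
    rw [this]; simp
  · intro h
    exact absurd (Finset.mem_Icc.2 ⟨le_refl 1, hL⟩) h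

theorem fLk_eq (b c : ℕ) (x : ℝ) : fLk (b + c + 2) (c + 1) x =
    ∑ m ∈ Finset.range (c + 1), (((b + c + 2).choose (b + m + 2) : ℝ) * ((b + m).choose m : ℝ) *
      (-1 : ℝ) ^ m) * x ^ (b + m + 2) := by
  unfold fLk
  symm
  apply Finset.sum_bij (fun m _ => m + 1)
  · intro m hm
    have := Finset.mem_range.1 hm
    exact Finset.mem_Icc.2 ⟨by omega, by omega⟩
  · intro m _ m' _ h
    omega
  · intro i hi
    have := Finset.mem_Icc.1 hi
    exact ⟨i - 1, Finset.mem_range.2 (by omega), by omega⟩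
  · intro m _
    have e1 : b + c + 2 - (c + 1) + (m + 1) = b + m + 2 := by omega
    rw [e1, Nat.add_sub_cancel, Nat.add_sub_cancel]

theorem coef_nat (b c m : ℕ) (hm : m ≤ c) :
    (b + c + 2).choose (b + m + 2) * (b + m).choose m * (b + m + 2) * (b + m + 1)
      = (b + c + 2) * (b + c + 1) * (b + c).choose b * c.choose m := by
  have h1 := Nat.add_one_mul_choose_eq (b + c + 1) (b + m + 1)
  have h2 := Nat.add_one_mul_choose_eq (b + c) (b + m)
  have h3 := Nat.choose_mul (n := b + c) (k := b + m) (s := b) (by omega)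
  have h4 : (b + m).choose m = (b + m).choose b := by
    rw [← Nat.choose_symm_add]
  rw [Nat.add_sub_cancel_left, Nat.add_sub_cancel_left] at h3
  simp only [Nat.succ_eq_add_one, Nat.add_assoc, Nat.reduceAdd] at *
  rw [h4]
  calc _ = ((b + (c + 2)).choose (b + (m + 2)) * (b + (m + 2))) * (b + (m + 1)) * (b + m).choose b := by ring
    _ = (b + (c + 2)) * ((b + (c + 1)).choose (b + (m + 1)) * (b + (m + 1))) * (b + m).choose b := by
        rw [← h1]; ring
    _ = (b + (c + 2)) * (b + (c + 1)) * ((b + c).choose (b + m) * (b + m).choose b) := by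
        rw [← h2]; ring
    _ = _ := by rw [h3]; ring

theorem fLk_mono (L k : ℕ) (hk : 1 ≤ k) (hkL : k ≤ L) : MonotoneOn (fLk L k) (Set.Icc 0 1) := by
  rcases hkL.eq_or_lt with rfl | hlt
  · intro x _ y _ hxy
    rw [fLk_zero_case k hk, fLk_zero_case k hk]
    gcongr
  obtain ⟨c, rfl⟩ : ∃ c, k = c + 1 := ⟨k - 1, by omega⟩
  obtain ⟨b, rfl⟩ : ∃ b, L = b + c + 2 := ⟨L - c - 2, by omega⟩
  set A : ℕ → ℝ := fun m => ((b + c + 2).choose (b + m + 2) : ℝ) * ((b + m).choose m : ℝ) *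
      (-1 : ℝ) ^ m with hA
  set G : ℝ → ℝ := fun x => ∑ m ∈ Finset.range (c + 1), A m * ((b + m + 2 : ℕ) * x ^ (b + m + 1)) with hG
  have hF : ∀ x, HasDerivAt (fLk (b + c + 2) (c + 1)) (G x) x := by
    intro x
    have : fLk (b + c + 2) (c + 1) = fun x => ∑ m ∈ Finset.range (c + 1), A m * x ^ (b + m + 2) :=
      funext (fLk_eq b c)
    rw [this]
    apply HasDerivAt.fun_sum
    intro m _
    exact (hasDerivAt_pow (b + m + 2) x).const_mul (A m)
  have hG' : ∀ x, HasDerivAt G (((b + c + 2) * (b + c + 1) * (b + c).choose b : ℕ) * x ^ b * (1 - x) ^ c) x := by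
    intro x
    have h : HasDerivAt G (∑ m ∈ Finset.range (c + 1), A m * ((b + m + 2 : ℕ) * ((b + m + 1 : ℕ) * x ^ (b + m)))) x := by
      apply HasDerivAt.fun_sum
      intro m _
      exact ((hasDerivAt_pow (b + m + 1) x).const_mul _).const_mul (A m)
    convert h using 1
    have e : (1 - x) ^ c = ∑ m ∈ Finset.range (c + 1), (-x) ^ m * (c.choose m : ℝ) := by
      rw [sub_eq_neg_add, add_pow]; simp
    rw [e, Finset.mul_sum]
    apply Finset.sum_congr rfl
    intro m hm
    have := coef_nat b c m (by have := Finset.mem_range.1 hm; omega)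
    have h' : (((b + c + 2).choose (b + m + 2) * (b + m).choose m * (b + m + 2) * (b + m + 1) : ℕ) : ℝ)
      = ((b + c + 2) * (b + c + 1) * (b + c).choose b * c.choose m : ℕ) := by rw [this]
    rw [Nat.cast_mul _ (c.choose m)] at h'
    rw [neg_pow x m, pow_add]
    calc _ = ((((b + c + 2) * (b + c + 1) * (b + c).choose b : ℕ) : ℝ) * (c.choose m : ℝ)) * (x ^ b * (-1) ^ m * x ^ m) := by ring
      _ = _ := by rw [← h', hA]; push_cast; ring
  have hGm : MonotoneOn G (Set.Icc 0 1) := by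
    apply monotoneOn_of_deriv_nonneg (convex_Icc 0 1)
    · exact fun x _ => (hG' x).continuousAt.continuousWithinAt
    · exact fun x _ => (hG' x).differentiableAt.differentiableWithinAt
    · intro x hx
      rw [interior_Icc] at hx
      rw [(hG' x).deriv]
      have := hx.1.le
      have : 0 ≤ 1 - x := by linarith [hx.2]
      positivity
  have hG0 : G 0 = 0 := by simp [hG]
  apply monotoneOn_of_deriv_nonneg (convex_Icc 0 1)
  · exact fun x _ => (hF x).continuousAt.continuousWithinAt
  · exact fun x _ => (hF x).differentiableAt.differentiableWithinAt
  · intro x hx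
    rw [interior_Icc] at hx
    rw [(hF x).deriv, ← hG0]
    exact hGm (by simp) ⟨hx.1.le, hx.2.le⟩ hx.1.le

theorem fLk_lip (L k : ℕ) : ∃ C : ℝ, 0 ≤ C ∧ ∀ x ∈ Set.Icc (0 : ℝ) 1, ∀ y ∈ Set.Icc (0 : ℝ) 1,
    |fLk L k x - fLk L k y| ≤ C * |x - y| := by
  have hc : ContDiff ℝ 1 (fLk L k) := by
    unfold fLk
    fun_prop
  obtain ⟨C, hC⟩ := (hc.contDiffOn (s := Set.Icc (0:ℝ) 1)).exists_lipschitzOnWith one_ne_zero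
    (convex_Icc 0 1) isCompact_Icc
  refine ⟨C, C.2, fun x hx y hy => ?_⟩
  have := hC.dist_le_mul x hx y hy
  simpa [Real.dist_eq] using this

theorem hasDerivAt_pos_sq (x : ℝ) : HasDerivAt (fun y : ℝ => (max y 0) ^ 2) (2 * max x 0) x := by
  have key : ∀ y : ℝ, y ≠ 0 → HasDerivAt (fun y : ℝ => (max y 0) ^ 2) (2 * max y 0) y := by
    intro y hy
    rcases lt_or_gt_of_ne hy with h | h
    · rw [max_eq_right h.le, mul_zero]
      apply (hasDerivAt_const y (0:ℝ)).congr_of_eventuallyEq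
      filter_upwards [Iio_mem_nhds h] with z hz
      rw [max_eq_right (le_of_lt hz)]; simp
    · rw [max_eq_left h.le]
      have := hasDerivAt_pow 2 y
      simp only [Nat.cast_ofNat, Nat.add_one_sub_one, pow_one] at this
      apply this.congr_of_eventuallyEq
      filter_upwards [Ioi_mem_nhds h] with z hz
      rw [max_eq_left (le_of_lt hz)]
  by_cases hx : x = 0
  · subst hx
    exact hasDerivAt_of_hasDerivAt_of_ne (g := fun y : ℝ => 2 * max y 0) (fun y hy => key y hy)
      (by fun_prop) (by fun_prop)
  · exact key x hx

theorem truncSol_monotone (L k : ℕ) (hk : 1 ≤ k) (hkL : k ≤ L)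
    (lam : ℝ) (hlam : 0 < lam) (K : ℕ)
    (s1 s2 : ℝ → ℕ → ℝ)
    (hs1 : IsTruncSys L k lam K s1) (hs2 : IsTruncSys L k lam K s2)
    (hb1 : ∀ t ∈ Set.Ici (0 : ℝ), ∀ j ≤ K + 1, s1 t j ∈ Set.Icc (0 : ℝ) 1)
    (hb2 : ∀ t ∈ Set.Ici (0 : ℝ), ∀ j ≤ K + 1, s2 t j ∈ Set.Icc (0 : ℝ) 1)
    (hinit : ∀ j, 1 ≤ j → j ≤ K → s2 0 j ≤ s1 0 j)
    (hbdry : ∀ t ∈ Set.Ici (0 : ℝ), s2 t (K + 1) ≤ s1 t (K + 1)) :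
    ∀ t ∈ Set.Ici (0 : ℝ), ∀ j, 1 ≤ j → j ≤ K + 1 → s2 t j ≤ s1 t j := by
  obtain ⟨C, hC0, hC⟩ := fLk_lip L k
  have hmono := fLk_mono L k hk hkL
  set p : ℝ → ℕ → ℝ := fun t j => max (s2 t j - s1 t j) 0 with hp
  have hp0 : ∀ t j, 0 ≤ p t j := fun t j => le_max_right _ _
  set V : ℝ → ℝ := fun t => ∑ j ∈ Finset.Icc 1 K, (p t j) ^ 2 with hV
  set D : ℝ → ℕ → ℝ := fun t j =>
    (lam * (fLk L k (s2 t (j - 1)) - fLk L k (s2 t j)) - k * (s2 t j - s2 t (j + 1))) -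
    (lam * (fLk L k (s1 t (j - 1)) - fLk L k (s1 t j)) - k * (s1 t j - s1 t (j + 1))) with hD
  have hVd : ∀ t ∈ Set.Ici (0 : ℝ), HasDerivWithinAt V
      (∑ j ∈ Finset.Icc 1 K, 2 * p t j * D t j) (Set.Ici 0) t := by
    intro t ht
    apply HasDerivWithinAt.fun_sum
    intro j hj
    obtain ⟨h1, h2⟩ := Finset.mem_Icc.1 hj
    exact (hasDerivAt_pos_sq (s2 t j - s1 t j)).comp_hasDerivWithinAt t
      ((hs2.2 j h1 h2 t ht).sub (hs1.2 j h1 h2 t ht))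
  have hV0 : ∀ t, 0 ≤ V t := fun t => Finset.sum_nonneg fun j _ => sq_nonneg _
  -- each positive part is controlled by V
  have hpV : ∀ t ∈ Set.Ici (0 : ℝ), ∀ j ≤ K + 1, (p t j) ^ 2 ≤ V t := by
    intro t ht j hj
    rcases Nat.eq_zero_or_pos j with rfl | h1
    · have : p t 0 = 0 := by simp [hp, hs1.1 t ht, hs2.1 t ht]
      rw [this]; simpa using hV0 t
    rcases hj.eq_or_lt with rfl | h2
    · have : p t (K + 1) = 0 := max_eq_right (by linarith [hbdry t ht])
      rw [this]; simpa using hV0 t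
    · exact Finset.single_le_sum (f := fun j => (p t j) ^ 2) (fun i _ => sq_nonneg _)
        (Finset.mem_Icc.2 ⟨h1, by omega⟩)
  have hpp : ∀ t ∈ Set.Ici (0 : ℝ), ∀ i ≤ K + 1, ∀ j ≤ K + 1, p t i * p t j ≤ V t := by
    intro t ht i hi j hj
    nlinarith [hpV t ht i hi, hpV t ht j hj, sq_nonneg (p t i - p t j)]
  set M : ℝ := K * (2 * (lam * C + k)) with hM
  have hbound : ∀ t ∈ Set.Ici (0 : ℝ), (∑ j ∈ Finset.Icc 1 K, 2 * p t j * D t j) ≤ M * V t := by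
    intro t ht
    have : ∀ j ∈ Finset.Icc 1 K, 2 * p t j * D t j ≤ 2 * (lam * C + k) * V t := by
      intro j hj
      obtain ⟨h1, h2⟩ := Finset.mem_Icc.1 hj
      by_cases hpos : s2 t j - s1 t j ≤ 0
      · have : p t j = 0 := max_eq_right hpos
        rw [this]
        have := hV0 t
        simp only [mul_zero, zero_mul]
        positivity
      push Not at hpos
      have hf1 : fLk L k (s1 t j) ≤ fLk L k (s2 t j) :=
        hmono (hb1 t ht j (by omega)) (hb2 t ht j (by omega)) (by linarith)
      have hf2 : fLk L k (s2 t (j - 1)) - fLk L k (s1 t (j - 1)) ≤ C * p t (j - 1) := by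
        have hx := hb2 t ht (j - 1) (by omega)
        have hy := hb1 t ht (j - 1) (by omega)
        rcases le_total (s2 t (j - 1)) (s1 t (j - 1)) with h | h
        · have := hmono hx hy h
          have := mul_nonneg hC0 (hp0 t (j - 1))
          linarith
        · have h3 := (le_abs_self _).trans (hC _ hx _ hy)
          rw [abs_of_nonneg (by linarith)] at h3
          exact h3.trans (mul_le_mul_of_nonneg_left (le_max_left _ _) hC0)
      have hf3 : s2 t (j + 1) - s1 t (j + 1) ≤ p t (j + 1) := le_max_left _ _
      have hDle : D t j ≤ lam * (C * p t (j - 1)) + k * p t (j + 1) := by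
        have e1 := mul_le_mul_of_nonneg_left hf2 hlam.le
        have e2 := mul_le_mul_of_nonneg_left hf1 hlam.le
        have e3 := mul_le_mul_of_nonneg_left hf3 (Nat.cast_nonneg (α := ℝ) k)
        have e4 := mul_nonneg (Nat.cast_nonneg (α := ℝ) k) hpos.le
        simp only [hD]
        linarith
      have g1 := hpp t ht j (by omega) (j - 1) (by omega)
      have g2 := hpp t ht j (by omega) (j + 1) (by omega)
      have g3 := mul_le_mul_of_nonneg_left g1 (mul_nonneg hlam.le hC0)
      have g4 := mul_le_mul_of_nonneg_left g2 (Nat.cast_nonneg (α := ℝ) k)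
      have g5 := mul_le_mul_of_nonneg_left hDle (hp0 t j)
      linarith
    have h := Finset.sum_le_sum this
    rw [Finset.sum_const, Nat.card_Icc, nsmul_eq_mul, Nat.add_sub_cancel] at h
    rw [hM]
    linarith
  have hWd : ∀ t ∈ Set.Ici (0 : ℝ), HasDerivWithinAt (fun t => V t * Real.exp (-M * t))
      ((∑ j ∈ Finset.Icc 1 K, 2 * p t j * D t j) * Real.exp (-M * t) +
        V t * (Real.exp (-M * t) * (-M))) (Set.Ici 0) t := by
    intro t ht
    have he : HasDerivAt (fun t => Real.exp (-M * t)) (Real.exp (-M * t) * (-M)) t := by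
      have := ((hasDerivAt_id t).const_mul (-M)).exp
      simpa using this
    exact (hVd t ht).mul he.hasDerivWithinAt
  have hanti : AntitoneOn (fun t => V t * Real.exp (-M * t)) (Set.Ici 0) := by
    apply antitoneOn_of_deriv_nonpos (convex_Ici 0)
    · exact fun t ht => (hWd t ht).continuousWithinAt
    · exact fun t ht => ((hWd t (interior_subset ht)).differentiableWithinAt).mono interior_subset
    · intro t ht
      rw [interior_Ici] at ht
      have ht' : t ∈ Set.Ici (0 : ℝ) := Set.mem_Ici.2 (le_of_lt (Set.mem_Ioi.1 ht))
      rw [((hWd t ht').hasDerivAt (Ici_mem_nhds ht)).deriv]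
      have := mul_le_mul_of_nonneg_right (hbound t ht') (Real.exp_pos (-M * t)).le
      linarith
  have hVzero : V 0 = 0 := by
    apply Finset.sum_eq_zero
    intro j hj
    obtain ⟨h1, h2⟩ := Finset.mem_Icc.1 hj
    have : p 0 j = 0 := max_eq_right (by linarith [hinit j h1 h2])
    rw [this]; simp
  intro t ht j _ hj
  have h1 := hanti (Set.mem_Ici.2 le_rfl) ht ht
  simp only [hVzero, zero_mul] at h1
  have h2 : V t ≤ 0 := by
    by_contra hcon
    push Not at hcon
    have := mul_pos hcon (Real.exp_pos (-M * t))
    linarith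
  have h3 := (hpV t ht j hj).trans h2
  have h4 : p t j = 0 := by
    apply pow_eq_zero_iff (two_ne_zero) |>.1
    exact le_antisymm h3 (sq_nonneg _)
  have h5 : s2 t j - s1 t j ≤ p t j := le_max_left _ _
  linarith
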